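/- arXiv:0710.5571 — 2 statements merged into one kernel-verified Lean document; each statement's English description precedes it below -/
import Mathlib

section
/- There is an absolute bound giving an exponential upper bound for the Erdős–Gyárfás (4,3) problem: for every integer k > 2^100 and every n ≥ 2^(2000k), every k-edge-coloring of the complete graph K_n contains a copy of K_4 whose six edges receive at most two distinct colors. Equivalently, g(k) < 2^(2000k) for k > 2^100. -/
open Finset

/-- The set of colors appearing on the edges inside a vertex set `S`. -/
def colorsOn {V C : Type*} [DecidableEq V] [DecidableEq C]
    (c : Sym2 V → C) (S : Finset V) : Finset C :=
  S.offDiag.image fun p => c s(p.1, p.2)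

/-- The edges inside `S` receive pairwise distinct colors (a rainbow copy of `K_{|S|}`). -/
def IsRainbow {V C : Type*} (c : Sym2 V → C) (S : Finset V) : Prop :=
  ∀ a ∈ S, ∀ b ∈ S, ∀ x ∈ S, ∀ y ∈ S,
    a ≠ b → x ≠ y → s(a, b) ≠ s(x, y) → c s(a, b) ≠ c s(x, y)

/-- All edges inside `S` receive the same color (a monochromatic copy of `K_{|S|}`). -/
def IsMonochromatic {V C : Type*} (c : Sym2 V → C) (S : Finset V) : Prop :=
  ∀ a ∈ S, ∀ b ∈ S, ∀ x ∈ S, ∀ y ∈ S, a ≠ b → x ≠ y → c s(a, b) = c s(x, y)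

/-- All edges inside `S` receive the color `i`. -/
def IsMonoInColor {V C : Type*} (c : Sym2 V → C) (i : C) (S : Finset V) : Prop :=
  ∀ a ∈ S, ∀ b ∈ S, a ≠ b → c s(a, b) = i

/-- `colorDeg c i x` is the degree `d_i(x)` of the vertex `x` in color `i`. -/
def colorDeg {V C : Type*} [Fintype V] [DecidableEq V] [DecidableEq C]
    (c : Sym2 V → C) (i : C) (x : V) : ℕ :=
  (univ.filter fun y => y ≠ x ∧ c s(x, y) = i).card

instance {V C : Type*} [DecidableEq V] [DecidableEq C] (c : Sym2 V → C) (S : Finset V) :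
    Decidable (IsRainbow c S) := by unfold IsRainbow; infer_instance

instance {V C : Type*} [DecidableEq V] [DecidableEq C] (c : Sym2 V → C) (S : Finset V) :
    Decidable (IsMonochromatic c S) := by unfold IsMonochromatic; infer_instance

instance {V C : Type*} [DecidableEq V] [DecidableEq C] (c : Sym2 V → C) (i : C) (S : Finset V) :
    Decidable (IsMonoInColor c i S) := by unfold IsMonoInColor; infer_instance

/-- There is a `k`-edge-coloring of `K_n` with no rainbow `K_t` in which every `K_4`
receives at least three colors (the colorings counted by `g(k,t)`). -/
def GoodColoring (k t n : ℕ) : Prop :=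
  ∃ c : Sym2 (Fin n) → Fin k,
    (∀ S : Finset (Fin n), S.card = t → ¬ IsRainbow c S) ∧
    (∀ S : Finset (Fin n), S.card = 4 → 3 ≤ (colorsOn c S).card)

/-!
Fix a colouring in which every `K_4` gets at least three colours. Vertex sets `U` are shrunk so
that colours disappear from them ("are killed"), using two mechanisms.

* Inside the colour-`i` neighbourhood of a vertex the colour `i` forms a matching, so half of that
  neighbourhood is free of `i` (`NoTwoColoredK4.exists_kill`).
* If all of `W` is joined to all of `R` in a single colour, then no colour inside `R` occurs inside
  `W` (`NoTwoColoredK4.disjoint_colorsOn`). A set `R` with `r` vertices can thereby kill far more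
  than `r` colours at once.

The invariant is a pair `(t, D)` such that `U` has no rainbow `K_t` avoiding the colours of `D`.
If all degrees in all colours were small compared with `|U| / t^4`, then a random `t`-tuple
would span such a rainbow `K_t` (`exists_rainbow`). Hence either some colour of `D` has a large
degree, and it is killed at a price polynomial in `k`, or half of the vertices have large degree
in a colour outside `D` (`exists_large_degree`).
In the second case, if `t` is bounded, killing one such colour has bounded price.
Otherwise a popular colour `i` is fixed, and dependent random choice
(`exists_common_neighborhood`) gives a set `Y` all of whose small subsets have many common
neighbours in colour `i`. With `l` about `log t` and `s = l ^ 2`, either `Y` contains about `log k`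
copies of rainbow `K_s` using distinct colours outside `D`, whose union `R` kills all these colours
at a bounded price per colour (`log k` copies also pay for the choice of `i` among `k` colours);
or the greedy choice of copies gets stuck (`exists_many_colors`), and then `Y` has no rainbow
`K_s` avoiding a set `D'`, which exceeds `D` by polylogarithmically many colours.

The passage from `t` to `s = l ^ 2` costs a factor `2 ^ (O(k / log t))`, because dependent random
choice uses about `k / l ^ 2` random vertices, each costing a factor `poly(t)`. Summed over
`t, (log t) ^ 2, ...` these exponents add up to `O(k)`. This is recorded by `boundExponent`, and
the induction is `card_le_of_avoidsRainbow`. It starts with `t = k` and `D = ∅`, since a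
rainbow `K_k` needs more than `k` colours.
-/

/-! ### Avoiding two-coloured copies of `K_4` -/

variable {V C : Type*} [DecidableEq V] [DecidableEq C]

/-- The neighbours of `x` inside `U` in colour `i`. The vertex `x` itself is excluded, since `c` also
assigns a colour to the diagonal. -/
def colorNbhd (c : Sym2 V → C) (U : Finset V) (i : C) (x : V) : Finset V :=
  U.filter fun y => y ≠ x ∧ c s(x, y) = i

/-- `U` contains no rainbow `K_t` none of whose edges has a colour in `D`. -/
def AvoidsRainbow (c : Sym2 V → C) (D : Finset C) (t : ℕ) (U : Finset V) : Prop :=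
  ∀ R ⊆ U, R.card = t → IsRainbow c R → ∃ a ∈ R, ∃ b ∈ R, a ≠ b ∧ c s(a, b) ∈ D

theorem mem_colorsOn {c : Sym2 V → C} {S : Finset V} {i : C} :
    i ∈ colorsOn c S ↔ ∃ a ∈ S, ∃ b ∈ S, a ≠ b ∧ c s(a, b) = i := by
  simp only [colorsOn, mem_image, mem_offDiag, Prod.exists]
  grind

theorem colorsOn_mono (c : Sym2 V → C) {S T : Finset V} (h : S ⊆ T) :
    colorsOn c S ⊆ colorsOn c T := by
  intro i
  simp only [mem_colorsOn]
  rintro ⟨a, ha, b, hb, h1⟩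
  exact ⟨a, h ha, b, h hb, h1⟩

/-- Every copy of `K_4` receives at least three colours. -/
def NoTwoColoredK4 (c : Sym2 V → C) : Prop :=
  ∀ S : Finset V, S.card = 4 → 3 ≤ (colorsOn c S).card

theorem NoTwoColoredK4.not_two_colors {c : Sym2 V → C} (hc : NoTwoColoredK4 c) {a b x y : V} (i j : C)
    (hab : a ≠ b) (hax : a ≠ x) (hay : a ≠ y) (hbx : b ≠ x) (hby : b ≠ y) (hxy : x ≠ y)
    (h1 : c s(a, b) = i ∨ c s(a, b) = j) (h2 : c s(a, x) = i ∨ c s(a, x) = j)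
    (h3 : c s(a, y) = i ∨ c s(a, y) = j) (h4 : c s(b, x) = i ∨ c s(b, x) = j)
    (h5 : c s(b, y) = i ∨ c s(b, y) = j) (h6 : c s(x, y) = i ∨ c s(x, y) = j) : False := by
  have hS : ({a, b, x, y} : Finset V).card = 4 := by
    rw [card_insert_of_notMem, card_insert_of_notMem, card_pair hxy] <;> simp [*]
  have hsub : colorsOn c {a, b, x, y} ⊆ {i, j} := by
    intro l hl
    obtain ⟨u, hu, v, hv, huv, rfl⟩ := mem_colorsOn.1 hl
    simp only [mem_insert, mem_singleton] at hu hv ⊢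
    rcases hu with rfl | rfl | rfl | rfl <;> rcases hv with rfl | rfl | rfl | rfl <;>
      first
      | exact absurd rfl huv
      | assumption
      | (rw [Sym2.eq_swap]; assumption)
  have := card_le_card hsub
  have := hc _ hS
  have := card_le_two (a := i) (b := j)
  omega

/-- Colour `i` forms a matching inside a colour-`i` neighbourhood, so half of the neighbourhood is
free of it. -/
theorem NoTwoColoredK4.exists_kill {c : Sym2 V → C} (hc : NoTwoColoredK4 c) (U : Finset V) (i : C) (x : V) :
    ∃ W ⊆ U, (colorNbhd c U i x).card ≤ 2 * W.card ∧ i ∉ colorsOn c W := by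
  classical
  set N := colorNbhd c U i x with hN
  obtain ⟨W, hW, hmax⟩ := exists_max_image (N.powerset.filter fun W => i ∉ colorsOn c W) card
    ⟨∅, by simp [colorsOn]⟩
  simp only [mem_filter, mem_powerset] at hW hmax
  refine ⟨W, hW.1.trans (filter_subset _ _), ?_, hW.2⟩
  -- by maximality of `W`, every other vertex of `N` has a colour-`i` neighbour in `W`
  have key : ∀ y ∈ N \ W, ∃ w ∈ W, c s(w, y) = i := by
    intro y hy
    rw [mem_sdiff] at hy
    by_contra! hne
    have := hmax (insert y W) ⟨insert_subset hy.1 hW.1, by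
      intro hi
      obtain ⟨a, ha, b, hb, hab, h1⟩ := mem_colorsOn.1 hi
      rw [mem_insert] at ha hb
      have h2 := hW.2
      rw [mem_colorsOn] at h2
      push Not at h2
      rcases ha with rfl | ha <;> rcases hb with rfl | hb
      · exact hab rfl
      · exact hne b hb (by rwa [Sym2.eq_swap])
      · exact hne a ha h1
      · exact h2 a ha b hb hab h1⟩
    rw [card_insert_of_notMem hy.2] at this
    omega
  choose! φ hφ hφc using key
  -- two edges of colour `i` at `φ y` would form, together with `x`, a two-coloured `K_4`
  have hinj : Set.InjOn φ ((N \ W : Finset V) : Set V) := by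
    intro y hy y' hy' he
    rw [mem_coe] at hy hy'
    by_contra hne
    have h1 := hφ y hy
    have h2 := hφc y hy
    have h3 := hφc y' hy'
    rw [← he] at h3
    have hwN := hW.1 h1
    rw [mem_sdiff] at hy hy'
    have hyN := hy.1
    have hyN' := hy'.1
    simp only [hN, colorNbhd, mem_filter] at hwN hyN hyN'
    have hwy : φ y ≠ y := fun h => hy.2 (h ▸ h1)
    have hwy' : φ y ≠ y' := fun h => hy'.2 (h ▸ h1)
    exact hc.not_two_colors (a := x) (b := φ y) (x := y) (y := y') i (c s(y, y'))
      hwN.2.1.symm hyN.2.1.symm hyN'.2.1.symm hwy hwy' hne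
      (Or.inl hwN.2.2) (Or.inl hyN.2.2) (Or.inl hyN'.2.2) (Or.inl h2) (Or.inl h3) (Or.inr rfl)
  have h1 : (N \ W).card ≤ W.card := card_le_card_of_injOn φ hφ hinj
  have h2 := card_sdiff_add_card_eq_card hW.1
  omega

/-! ### Random tuples and large colour degrees -/

/-- If, after resampling coordinate `b` of any tuple in `U ^ t`, at most `M` values lead into `S`,
then `S` has density at most `M / |U|` in `U ^ t`. -/
theorem card_resample {t : ℕ} (U : Finset V) (S : Finset (Fin t → V))
    (hS : S ⊆ Fintype.piFinset fun _ => U) (b : Fin t) (M : ℕ)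
    (h : ∀ g ∈ Fintype.piFinset fun _ : Fin t => U,
      (U.filter fun v => Function.update g b v ∈ S).card ≤ M) :
    S.card * U.card ≤ M * U.card ^ t := by
  have hT : (Fintype.piFinset fun _ : Fin t => U).card = U.card ^ t := by simp
  rw [← card_product, ← hT]
  refine card_le_mul_card_image_of_maps_to (f := fun p => Function.update p.1 b p.2) ?_ M ?_
  · rintro ⟨f, v⟩ hp
    simp only [mem_product] at hp
    have hf := hS hp.1
    simp only [Fintype.mem_piFinset] at hf ⊢
    intro j
    by_cases hj : j = b
    · subst hj; simpa using hp.2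
    · simpa [hj] using hf j
  · intro g hg
    refine le_trans ?_ (h g hg)
    refine card_le_card_of_injOn (fun p => p.1 b) ?_ ?_
    · rintro ⟨f, v⟩ hp
      simp only [coe_filter, mem_product, Set.mem_ofPred_eq] at hp ⊢
      have hf := hS hp.1.1
      simp only [Fintype.mem_piFinset] at hf
      refine ⟨hf b, ?_⟩
      rw [← hp.2]
      simpa using hp.1.1
    · rintro ⟨f, v⟩ hp ⟨f', v'⟩ hp' he
      simp only [coe_filter, mem_product, Set.mem_ofPred_eq] at hp hp' he
      have h1 : Function.update f b v = Function.update f' b v' := hp.2.trans hp'.2.symm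
      have h2 : v = v' := by simpa using congrFun h1 b
      have h3 : f = f' := by
        funext j
        by_cases hj : j = b
        · rw [hj]; exact he
        · simpa [hj] using congrFun h1 j
      rw [h2, h3]

/-- If all colour degrees, and all total degrees in the colours of `D`, are below `|U| / t ^ 4`, then
a union bound over the repeated vertices, the edges with colour in `D` and the pairs of edges with
equal colours shows that some `t`-tuple spans a rainbow `K_t` avoiding `D`. -/
theorem exists_rainbow (c : Sym2 V → C) (U : Finset V) (D : Finset C) (t M : ℕ)
    (hM : t ^ 4 * M < U.card)
    (h : ∀ x ∈ U, ∀ i, 1 + (U.filter fun y => y ≠ x ∧ c s(x, y) ∈ D).card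
      + (colorNbhd c U i x).card ≤ M) :
    ¬ AvoidsRainbow c D t U := by
  classical
  intro hav
  let T := Fintype.piFinset fun _ : Fin t => U
  let bad : Fin t × Fin t × Fin t × Fin t → (Fin t → V) → Prop := fun p f =>
    p.2.1 ≠ p.1 ∧ (f p.2.1 = f p.1 ∨ (f p.2.1 ≠ f p.1 ∧ c s(f p.1, f p.2.1) ∈ D) ∨
      (p.2.1 ≠ p.2.2.1 ∧ p.2.1 ≠ p.2.2.2 ∧ f p.2.1 ≠ f p.1 ∧
        c s(f p.1, f p.2.1) = c s(f p.2.2.1, f p.2.2.2)))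
  have hT : T.card = U.card ^ t := by simp [T]
  have hcov : ∀ f ∈ T, ∃ p, bad p f := by
    intro f hf
    by_contra! hno
    have hfU : ∀ j, f j ∈ U := by simpa [T] using hf
    have hinj : Function.Injective f := by
      intro a b hab
      by_contra hne
      exact hno (b, a, a, a) ⟨hne, Or.inl hab⟩
    obtain ⟨a, ha, b, hb, hab, hD⟩ := hav (univ.image f)
      (by intro v hv; obtain ⟨j, -, rfl⟩ := mem_image.1 hv; exact hfU j)
      (by rw [card_image_of_injective _ hinj]; simp) (by
        intro a ha b hb x hx y hy hab hxy hne heq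
        obtain ⟨a, -, rfl⟩ := mem_image.1 ha
        obtain ⟨b, -, rfl⟩ := mem_image.1 hb
        obtain ⟨x, -, rfl⟩ := mem_image.1 hx
        obtain ⟨y, -, rfl⟩ := mem_image.1 hy
        have hab' : a ≠ b := fun h => hab (h ▸ rfl)
        -- one of `a`, `b` is not an endpoint of the second edge; it can be resampled freely
        by_cases hbx : b ≠ x ∧ b ≠ y
        · exact hno (a, b, x, y) ⟨hab'.symm, Or.inr (Or.inr ⟨hbx.1, hbx.2, hab.symm, heq⟩)⟩
        · have hax : a ≠ x ∧ a ≠ y := by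
            refine ⟨?_, ?_⟩
            · rintro rfl
              apply hne
              have : b = y := by by_contra h; exact hbx ⟨hab'.symm, h⟩
              rw [this]
            · rintro rfl
              apply hne
              have : b = x := by by_contra h; exact hbx ⟨h, hab'.symm⟩
              rw [this, Sym2.eq_swap]
          refine hno (b, a, x, y) ⟨hab', Or.inr (Or.inr ⟨hax.1, hax.2, hab, ?_⟩)⟩
          rw [Sym2.eq_swap]; exact heq)
    obtain ⟨a, -, rfl⟩ := mem_image.1 ha
    obtain ⟨b, -, rfl⟩ := mem_image.1 hb
    exact hno (a, b, b, b) ⟨fun h => hab (congrArg f h.symm), Or.inr (Or.inl ⟨hab.symm, hD⟩)⟩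
  have hbad : ∀ p, (T.filter (bad p)).card * U.card ≤ M * U.card ^ t := by
    rintro ⟨a, b, x, y⟩
    refine card_resample U _ (filter_subset _ _) b M ?_
    intro g hg
    have hgU : ∀ j, g j ∈ U := by simpa using hg
    refine le_trans ?_ (h (g a) (hgU a) (c s(g x, g y)))
    have hsub : (U.filter fun v => Function.update g b v ∈ T.filter (bad (a, b, x, y))) ⊆
        ({g a} ∪ (U.filter fun w => w ≠ g a ∧ c s(g a, w) ∈ D)) ∪
          colorNbhd c U (c s(g x, g y)) (g a) := by
      intro v hv
      simp only [mem_filter, bad] at hv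
      obtain ⟨hvU, -, hba, hv⟩ := hv
      simp only [Function.update_self, Function.update_of_ne hba.symm] at hv
      simp only [mem_union, mem_singleton, mem_filter, colorNbhd]
      rcases hv with hv | hv | ⟨h1, h2, h3, h4⟩
      · exact Or.inl (Or.inl hv)
      · exact Or.inl (Or.inr ⟨hvU, hv⟩)
      · rw [Function.update_of_ne h1.symm, Function.update_of_ne h2.symm] at h4
        exact Or.inr ⟨hvU, h3, h4⟩
    refine (card_le_card hsub).trans ((card_union_le _ _).trans ?_)
    gcongr
    exact (card_union_le _ _).trans (by simp)
  have h1 : T.card ≤ ∑ p, (T.filter (bad p)).card := by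
    refine le_trans (card_le_card ?_) card_biUnion_le
    intro f hf
    obtain ⟨p, hp⟩ := hcov f hf
    exact mem_biUnion.2 ⟨p, mem_univ _, mem_filter.2 ⟨hf, hp⟩⟩
  have h2 : T.card * U.card ≤ t ^ 4 * (M * U.card ^ t) := by
    calc T.card * U.card ≤ (∑ p, (T.filter (bad p)).card) * U.card := by gcongr
      _ = ∑ p, (T.filter (bad p)).card * U.card := by rw [sum_mul]
      _ ≤ ∑ _p : Fin t × Fin t × Fin t × Fin t, M * U.card ^ t := sum_le_sum fun p _ => hbad p
      _ = t ^ 4 * (M * U.card ^ t) := by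
        simp only [sum_const, card_univ, Fintype.card_prod, Fintype.card_fin, smul_eq_mul]
        ring
  have h3 : 0 < U.card ^ t := pow_pos (by omega) _
  rw [hT] at h2
  nlinarith

/-- A set without rainbow `K_t` avoiding `D` has a vertex of large degree in a colour of `D`, or at
least half of its vertices have large degree in a colour outside `D`. -/
theorem exists_large_degree (c : Sym2 V → C) [Fintype C] (U : Finset V) (D : Finset C) (t : ℕ)
    (ht : t ≠ 0) (hU : 8 * t ^ 4 ≤ U.card) (hav : AvoidsRainbow c D t U) :
    (∃ x ∈ U, ∃ i ∈ D, U.card ≤ 8 * t ^ 4 * Fintype.card C * (colorNbhd c U i x).card) ∨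
    ∃ X ⊆ U, U.card ≤ 2 * X.card ∧
      ∀ x ∈ X, ∃ i, i ∉ D ∧ U.card ≤ 8 * t ^ 4 * (colorNbhd c U i x).card := by
  classical
  by_contra! hno
  obtain ⟨h1, h2⟩ := hno
  set X := U.filter fun x => ∃ i, i ∉ D ∧ U.card ≤ 8 * t ^ 4 * (colorNbhd c U i x).card with hX
  have hXU : X ⊆ U := filter_subset _ _
  have hXsmall : 2 * X.card < U.card := by
    by_contra! hge
    obtain ⟨x, hx, hx'⟩ := h2 X hXU hge
    obtain ⟨-, i, hi, hi'⟩ := mem_filter.1 hx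
    exact absurd hi' (not_le.2 (hx' i hi))
  have ht4 : 0 < t ^ 4 := by positivity
  have hsub : AvoidsRainbow c D t (U \ X) := fun R hR => hav R (hR.trans sdiff_subset)
  have hcard := card_sdiff_add_card_eq_card hXU
  set q := U.card / (8 * t ^ 4) with hq
  have hq1 : 1 ≤ q := (Nat.one_le_div_iff (by positivity)).2 hU
  have hq2 : q * (8 * t ^ 4) ≤ U.card := Nat.div_mul_le_self _ _
  refine exists_rainbow c (U \ X) D t (3 * q) (by nlinarith) ?_ hsub
  intro x hx i
  obtain ⟨hxU, hxX⟩ := mem_sdiff.1 hx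
  have hDdeg : (U.filter fun y => y ≠ x ∧ c s(x, y) ∈ D).card ≤ q := by
    rw [hq, Nat.le_div_iff_mul_le (by positivity)]
    have e1 : (U.filter fun y => y ≠ x ∧ c s(x, y) ∈ D) ⊆ D.biUnion fun i => colorNbhd c U i x := by
      intro y hy
      simp only [mem_filter, mem_biUnion, colorNbhd] at hy ⊢
      exact ⟨_, hy.2.2, hy.1, hy.2.1, rfl⟩
    have e2 := (card_le_card e1).trans card_biUnion_le
    rcases D.eq_empty_or_nonempty with hD | hD
    · subst hD; simp
    have hk : 0 < Fintype.card C := Fintype.card_pos_iff.2 ⟨hD.choose⟩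
    refine Nat.le_of_mul_le_mul_left ?_ hk
    calc Fintype.card C * (_ * (8 * t ^ 4))
        ≤ Fintype.card C * ((∑ i ∈ D, (colorNbhd c U i x).card) * (8 * t ^ 4)) := by gcongr
      _ = ∑ i ∈ D, 8 * t ^ 4 * Fintype.card C * (colorNbhd c U i x).card := by
        rw [sum_mul, mul_sum]; exact sum_congr rfl fun _ _ => by ring
      _ ≤ ∑ i ∈ D, U.card := sum_le_sum fun i hi => (h1 x hxU i hi).le
      _ = D.card * U.card := by simp
      _ ≤ Fintype.card C * U.card := by gcongr; exact card_le_univ D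
  have hi : (colorNbhd c U i x).card ≤ q := by
    by_cases hiD : i ∈ D
    · refine (card_le_card fun y hy => ?_).trans hDdeg
      simp only [mem_filter, colorNbhd] at hy ⊢
      exact ⟨hy.1, hy.2.1, hy.2.2 ▸ hiD⟩
    · rw [hq, Nat.le_div_iff_mul_le (by positivity)]
      by_contra! hlt
      refine hxX (mem_filter.2 ⟨hxU, i, hiD, ?_⟩)
      rw [mul_comm]; exact hlt.le
  have m1 : (filter (fun y => y ≠ x ∧ c s(x, y) ∈ D) (U \ X)).card ≤ q :=
    (card_le_card (filter_subset_filter _ sdiff_subset)).trans hDdeg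
  have m2 : (colorNbhd c (U \ X) i x).card ≤ q :=
    (card_le_card (filter_subset_filter _ sdiff_subset)).trans hi
  omega

/-! ### Dependent random choice -/

/-- Dependent random choice. If every vertex of `X` has degree at least `|U| / M` into `U`, then the
common neighbourhood `Y` of `a` random vertices of `X` can be large and such that every `r`-tuple
in `Y` has at least `μ` common neighbours in `X`. -/
theorem exists_common_neighborhood {W : Type*} [DecidableEq W] (X : Finset W) (U : Finset V) (adj : W → V → Prop)
    [∀ x y, Decidable (adj x y)] (hX : X.Nonempty) (hU : U.Nonempty) (a r M μ : ℕ) (ha : a ≠ 0)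
    (hdeg : ∀ x ∈ X, U.card ≤ M * (U.filter fun y => adj x y).card)
    (hμ : 2 * M ^ a * U.card ^ r * μ ^ a ≤ X.card ^ a) :
    ∃ Y ⊆ U, U.card ≤ 2 * M ^ a * Y.card ∧
      ∀ g : Fin r → V, (∀ j, g j ∈ Y) → μ ≤ (X.filter fun x => ∀ j, adj x (g j)).card := by
  classical
  by_contra! hno
  have hu : 0 < U.card := hU.card_pos
  let F := Fintype.piFinset fun _ : Fin a => X
  let G := Fintype.piFinset fun _ : Fin r => U
  let N : (Fin a → W) → Finset V := fun f => U.filter fun y => ∀ l, adj (f l) y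
  let cd : (Fin r → V) → ℕ := fun g => (X.filter fun x => ∀ j, adj x (g j)).card
  let bad : (Fin a → W) → Finset (Fin r → V) := fun f =>
    G.filter fun g => (∀ j, g j ∈ N f) ∧ cd g < μ
  have hF : F.card = X.card ^ a := by simp [F]
  have hG : G.card = U.card ^ r := by simp [G]
  have hFne : F.Nonempty := by
    rw [← card_pos, hF]; exact pow_pos hX.card_pos _
  -- every tuple `f` either has a small common neighbourhood or sees a bad tuple
  have h1 : ∀ f ∈ F, 2 * M ^ a * (N f).card < U.card + 2 * M ^ a * U.card * (bad f).card := by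
    intro f hf
    by_cases hlt : U.card ≤ 2 * M ^ a * (N f).card
    · obtain ⟨g, hg, hgμ⟩ := hno (N f) (filter_subset _ _) hlt
      have hb : 0 < (bad f).card := card_pos.2 ⟨g, by
        simp only [bad, mem_filter, G, Fintype.mem_piFinset]
        exact ⟨fun j => (mem_filter.1 (hg j)).1, hg, hgμ⟩⟩
      have h2 : (N f).card ≤ U.card := card_le_card (filter_subset _ _)
      have h3 : 2 * M ^ a * (N f).card ≤ 2 * M ^ a * U.card * (bad f).card := by
        calc 2 * M ^ a * (N f).card ≤ 2 * M ^ a * U.card * 1 := by rw [mul_one]; gcongr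
          _ ≤ _ := by gcongr; exact hb
      omega
    · omega
  -- a bad tuple is seen by fewer than `μ ^ a` of the tuples `f`
  have h2 : ∑ f ∈ F, (bad f).card ≤ U.card ^ r * μ ^ a := by
    calc ∑ f ∈ F, (bad f).card
        = ∑ f ∈ F, ∑ g ∈ G, if (∀ j, g j ∈ N f) ∧ cd g < μ then 1 else 0 := by
          simp only [bad, card_filter]
      _ = ∑ g ∈ G, ∑ f ∈ F, if (∀ j, g j ∈ N f) ∧ cd g < μ then 1 else 0 := sum_comm
      _ ≤ ∑ g ∈ G, μ ^ a := by
          refine sum_le_sum fun g hg => ?_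
          rw [← card_filter]
          by_cases hc : cd g < μ
          · calc _ ≤ (Fintype.piFinset fun _ : Fin a =>
                  X.filter fun x => ∀ j, adj x (g j)).card := by
                  refine card_le_card fun f hf => ?_
                  simp only [F, N, mem_filter, Fintype.mem_piFinset] at hf ⊢
                  exact fun l => ⟨hf.1 l, fun j => (hf.2.1 j).2 l⟩
              _ = cd g ^ a := by simp [cd]
              _ ≤ μ ^ a := by gcongr
          · simp [hc]
      _ = U.card ^ r * μ ^ a := by rw [sum_const, hG, smul_eq_mul]
  -- convexity bounds the average size of the common neighbourhood from below
  have h3 : X.card ^ a * U.card ≤ M ^ a * ∑ f ∈ F, (N f).card := by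
    let d : V → ℕ := fun y => (X.filter fun x => adj x y).card
    have e1 : ∑ f ∈ F, (N f).card = ∑ y ∈ U, d y ^ a := by
      calc ∑ f ∈ F, (N f).card = ∑ f ∈ F, ∑ y ∈ U, if ∀ l, adj (f l) y then 1 else 0 := by
            simp only [N, card_filter]
        _ = ∑ y ∈ U, ∑ f ∈ F, if ∀ l, adj (f l) y then 1 else 0 := sum_comm
        _ = ∑ y ∈ U, d y ^ a := by
            refine sum_congr rfl fun y _ => ?_
            rw [← card_filter]
            have : (F.filter fun f => ∀ l, adj (f l) y) =
                Fintype.piFinset fun _ : Fin a => X.filter fun x => adj x y := by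
              ext f
              simp only [F, mem_filter, Fintype.mem_piFinset]
              exact forall_and.symm
            rw [this]; simp [d]
    have e2 : X.card * U.card ≤ M * ∑ y ∈ U, d y := by
      calc X.card * U.card = ∑ x ∈ X, U.card := by simp
        _ ≤ ∑ x ∈ X, M * (U.filter fun y => adj x y).card := sum_le_sum hdeg
        _ = M * ∑ x ∈ X, ∑ y ∈ U, if adj x y then 1 else 0 := by
            rw [mul_sum]; simp only [card_filter]
        _ = M * ∑ y ∈ U, d y := by rw [sum_comm]; simp only [d, card_filter]
    obtain ⟨b, rfl⟩ := Nat.exists_eq_succ_of_ne_zero ha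
    have e3 : (∑ y ∈ U, d y) ^ (b + 1) ≤ U.card ^ b * ∑ y ∈ U, d y ^ (b + 1) := by
      simpa using pow_sum_le_card_mul_sum_pow (s := U) (f := d) (fun _ _ => Nat.zero_le _) b
    rw [e1]
    refine Nat.le_of_mul_le_mul_left ?_ (pow_pos hu b)
    calc U.card ^ b * (X.card ^ (b + 1) * U.card) = (X.card * U.card) ^ (b + 1) := by ring
      _ ≤ (M * ∑ y ∈ U, d y) ^ (b + 1) := by gcongr
      _ = M ^ (b + 1) * (∑ y ∈ U, d y) ^ (b + 1) := by ring
      _ ≤ M ^ (b + 1) * (U.card ^ b * ∑ y ∈ U, d y ^ (b + 1)) := by gcongr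
      _ = U.card ^ b * (M ^ (b + 1) * ∑ y ∈ U, d y ^ (b + 1)) := by ring
  have h4 := sum_lt_sum_of_nonempty hFne h1
  rw [← mul_sum, sum_add_distrib, ← mul_sum, sum_const, hF, smul_eq_mul] at h4
  have h5 : 2 * M ^ a * U.card * ∑ f ∈ F, (bad f).card ≤ X.card ^ a * U.card := by
    calc 2 * M ^ a * U.card * ∑ f ∈ F, (bad f).card
        ≤ 2 * M ^ a * U.card * (U.card ^ r * μ ^ a) := by gcongr
      _ = (2 * M ^ a * U.card ^ r * μ ^ a) * U.card := by ring
      _ ≤ _ := by gcongr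
  nlinarith


/-! ### Many colours on few vertices -/

theorem mem_colorsOn_of_nb {c : Sym2 V → C} {U : Finset V} {i : C} {x : V} (hx : x ∈ U)
    (h : 0 < (colorNbhd c U i x).card) : i ∈ colorsOn c U := by
  obtain ⟨y, hy⟩ := card_pos.1 h
  obtain ⟨hyU, hyx, hc⟩ := mem_filter.1 hy
  exact mem_colorsOn.2 ⟨x, hx, y, hyU, hyx.symm, hc⟩

theorem card_colorsOn_of_isRainbow {c : Sym2 V → C} {R : Finset V} (h : IsRainbow c R) :
    (colorsOn c R).card = R.card.choose 2 := by
  rw [← Sym2.card_image_offDiag, colorsOn]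
  have : (R.offDiag.image fun p => c s(p.1, p.2)) = (R.offDiag.image Sym2.mk.uncurry).image c := by
    rw [image_image]; rfl
  rw [this, card_image_of_injOn]
  intro e he e' he' hee
  simp only [coe_image, Set.mem_image, mem_coe, mem_offDiag, Prod.exists] at he he'
  obtain ⟨a, b, ⟨ha, hb, hab⟩, rfl⟩ := he
  obtain ⟨x, y, ⟨hx, hy, hxy⟩, rfl⟩ := he'
  by_contra hne
  exact h a ha b hb x hx y hy hab hxy hne hee

/-- Greedy choice of `q` copies of rainbow `K_s` in `Y` with pairwise disjoint colour sets, all avoiding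
`D`. The copies may share vertices, and `Z` omits the colours between different copies. -/
theorem exists_many_colors (c : Sym2 V → C) (Y : Finset V) (D : Finset C) (s q : ℕ)
    (h : ∀ D', D ⊆ D' → D'.card ≤ D.card + q * s.choose 2 → ¬ AvoidsRainbow c D' s Y) :
    ∃ R ⊆ Y, R.card ≤ q * s ∧ ∃ Z ⊆ colorsOn c R, Disjoint Z D ∧ Z.card = q * s.choose 2 := by
  induction q with
  | zero => exact ⟨∅, by simp, by simp, ∅, by simp, by simp, by simp⟩
  | succ q ih =>
    obtain ⟨R, hRY, hRc, Z, hZR, hZD, hZc⟩ :=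
      ih fun D' h1 h2 => h D' h1 (h2.trans (by gcongr; omega))
    have h1 : ¬ AvoidsRainbow c (D ∪ Z) s Y := h _ subset_union_left (by
      refine (card_union_le _ _).trans ?_
      rw [hZc]; gcongr; omega)
    simp only [AvoidsRainbow, not_forall] at h1
    obtain ⟨Q, hQY, hQc, hQ, hQD⟩ := h1
    push Not at hQD
    have hQdis : Disjoint (colorsOn c Q) (D ∪ Z) := by
      rw [disjoint_left]
      intro i hi
      obtain ⟨a, ha, b, hb, hab, rfl⟩ := mem_colorsOn.1 hi
      exact hQD a ha b hb hab
    rw [disjoint_union_right] at hQdis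
    refine ⟨R ∪ Q, union_subset hRY hQY, ?_, Z ∪ colorsOn c Q, ?_, ?_, ?_⟩
    · refine (card_union_le _ _).trans ?_
      rw [hQc, add_mul]; omega
    · exact union_subset (hZR.trans (colorsOn_mono c subset_union_left))
        (colorsOn_mono c subset_union_right)
    · exact disjoint_union_left.2 ⟨hZD, hQdis.1⟩
    · rw [card_union_of_disjoint hQdis.2.symm, hZc, card_colorsOn_of_isRainbow hQ, hQc]; ring

/-- Colours inside `R` are killed in every set completely joined to `R` in one colour. -/
theorem NoTwoColoredK4.disjoint_colorsOn {c : Sym2 V → C} (hc : NoTwoColoredK4 c) {R W : Finset V} {i : C}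
    (h : ∀ x ∈ W, ∀ y ∈ R, y ≠ x ∧ c s(x, y) = i) :
    Disjoint (colorsOn c R) (colorsOn c W) := by
  rw [disjoint_left]
  intro j hR hW
  obtain ⟨u, hu, v, hv, huv, h1⟩ := mem_colorsOn.1 hR
  obtain ⟨x, hx, y, hy, hxy, h2⟩ := mem_colorsOn.1 hW
  exact hc.not_two_colors (a := x) (b := y) (x := u) (y := v) i j hxy
    (h x hx u hu).1.symm (h x hx v hv).1.symm (h y hy u hu).1.symm (h y hy v hv).1.symm huv
    (Or.inr h2) (Or.inl (h x hx u hu).2) (Or.inl (h x hx v hv).2)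
    (Or.inl (h y hy u hu).2) (Or.inl (h y hy v hv).2) (Or.inr h1)

/-! ### Numerical estimates -/

theorem log_sq_bound {l : ℕ} (hl : 250 ≤ l) :
    3 * (Nat.log 2 (l ^ 2) + 1) ≤ l ∧ l ^ 2 < 2 ^ (l - 1) := by
  have key : ∀ m, 80 ≤ m → (3 * m + 13) ^ 2 < 2 ^ m := by
    intro m hm
    induction m, hm using Nat.le_induction with
    | base => norm_num
    | succ m hm ih => rw [pow_succ 2 m]; nlinarith
  have h1 := key ((l - 10) / 3) (by omega)
  have h2 : l ≤ 3 * ((l - 10) / 3) + 13 := by omega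
  have h3 : l ^ 2 < 2 ^ ((l - 10) / 3) := lt_of_le_of_lt (by gcongr) h1
  have h4 : Nat.log 2 (l ^ 2) < (l - 10) / 3 := Nat.log_lt_of_lt_pow (by positivity) h3
  refine ⟨by omega, h3.trans_le ?_⟩
  exact Nat.pow_le_pow_right (by norm_num) (by omega)

theorem pow_six_bound {L : ℕ} (hL : 101 ≤ L) : L * (1 + 5 * L + 5 * L ^ 6) ≤ 2 ^ (L - 1) := by
  have key : ∀ m, 100 ≤ m → 6 * (m + 1) ^ 7 ≤ 2 ^ m := by
    intro m hm
    induction m, hm using Nat.le_induction with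
    | base => norm_num
    | succ m hm ih =>
      have e : (m + 1 + 1) ^ 7 ≤ 2 * (m + 1) ^ 7 := by
        have e1 : (10 : ℕ) * (m + 2) ≤ 11 * (m + 1) := by omega
        have e2 : (10 * (m + 2)) ^ 7 ≤ (11 * (m + 1)) ^ 7 := by gcongr
        rw [mul_pow, mul_pow] at e2
        have e3 : m + 1 + 1 = m + 2 := rfl
        rw [e3]
        norm_num at e2
        omega
      rw [pow_succ 2 m]
      omega
  have h := key (L - 1) (by omega)
  rw [show L - 1 + 1 = L by omega] at h
  refine le_trans ?_ h
  have h1 : 5 * L ^ 2 + L ≤ L ^ 7 := by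
    have : L ^ 7 = L ^ 2 * L ^ 5 := by ring
    have h5 : 100 ^ 5 ≤ L ^ 5 := by gcongr; omega
    nlinarith
  nlinarith

/-- The choice of parameters, where `l`, `L` are about `log t`, `log k`. Dependent random choice uses
`a` random vertices and costs a factor `2 ^ h` in the size of common neighbourhoods; `z` is the number
of colours killed by `L` copies of a rainbow `K_{l ^ 2}`. The conclusions say that dependent
random choice applies to sets of size at most `2 ^ (2000 * k)`, that killing `z` colours is worth
its price, and that passing from `t` to `l ^ 2` is covered by `boundExponent`. -/
theorem numeric {k L l : ℕ} (hL : 101 ≤ L) (hkL : 2 ^ (L - 1) ≤ k) (hl : 250 ≤ l) (hlL : l ≤ L) :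
    let a := 20 * k / l ^ 2 + 1
    let h := 200 * L * l ^ 4
    let z := L * (l ^ 2).choose 2
    1 + (4 * l + 3) * a + 2000 * k * (L * l ^ 2) ≤ h * a ∧
    3 + L + h ≤ 1000 * z ∧
    1 + (4 * l + 3) * a + 9 * L * z + (300 * k - 100 * k / (Nat.log 2 (l ^ 2) + 1)) ≤
      300 * k - 100 * k / l := by
  intro a h z
  have hl2 : 0 < l ^ 2 := by positivity
  have ha1 : 20 * k ≤ a * l ^ 2 := by
    have := Nat.div_add_mod (20 * k) (l ^ 2)
    have := Nat.mod_lt (20 * k) hl2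
    have : a * l ^ 2 = l ^ 2 * (20 * k / l ^ 2) + l ^ 2 := by simp only [a]; ring
    omega
  have hz : 2 * z + L * l ^ 2 = L * l ^ 4 := by
    have h1 : 2 * (l ^ 2).choose 2 = l ^ 2 * (l ^ 2 - 1) := by
      rw [Nat.choose_two_right, Nat.mul_div_cancel' (Nat.even_mul_pred_self _).two_dvd]
    have h2 : l ^ 2 * (l ^ 2 - 1) + l ^ 2 = l ^ 4 := by
      obtain ⟨b, hb⟩ : ∃ b, l ^ 2 = b + 1 := ⟨l ^ 2 - 1, by omega⟩
      have : l ^ 4 = l ^ 2 * l ^ 2 := by ring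
      rw [this, hb, Nat.add_sub_cancel]; ring
    calc 2 * z + L * l ^ 2 = L * (2 * (l ^ 2).choose 2 + l ^ 2) := by simp only [z]; ring
      _ = L * l ^ 4 := by rw [h1, h2]
  have hl4 : L * l ^ 4 = L * l ^ 2 * l ^ 2 := by ring
  have hl62500 : 62500 ≤ l ^ 2 := by nlinarith
  refine ⟨?_, ?_, ?_⟩
  · have e1 : 2000 * k * (L * l ^ 2) ≤ 100 * L * l ^ 4 * a := by
      calc 2000 * k * (L * l ^ 2) = 100 * (L * l ^ 2) * (20 * k) := by ring
        _ ≤ 100 * (L * l ^ 2) * (a * l ^ 2) := by gcongr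
        _ = _ := by ring
    have e2 : 1 + (4 * l + 3) * a ≤ 100 * L * l ^ 4 * a := by
      have ha : 1 ≤ a := by simp [a]
      have : 4 * l + 4 ≤ 100 * L * l ^ 4 := by
        have : 1 ≤ l ^ 4 := Nat.one_le_pow _ _ (by omega)
        nlinarith
      nlinarith
    have e3 : h * a = 100 * L * l ^ 4 * a + 100 * L * l ^ 4 * a := by simp only [h]; ring
    omega
  · have : h = 200 * (L * l ^ 4) := by simp only [h]; ring
    have h3 : 62500 * (L * l ^ 2) ≤ L * l ^ 2 * l ^ 2 := by
      rw [mul_comm]; gcongr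
    have h4 : L * 62500 ≤ L * l ^ 2 := by gcongr
    omega
  · obtain ⟨hls, -⟩ := log_sq_bound hl
    set ls := Nat.log 2 (l ^ 2) + 1 with hlsd
    have hls0 : 0 < ls := by omega
    set x := 100 * k / l with hx
    have hxl : x * l ≤ 100 * k := Nat.div_mul_le_self _ _
    have hy : 3 * x ≤ 100 * k / ls := by
      rw [Nat.le_div_iff_mul_le hls0]
      nlinarith
    have hy' : 100 * k / ls ≤ 100 * k := Nat.div_le_self _ _
    have e1 : 5 * l * (20 * k / l ^ 2) ≤ x := by
      rw [hx, Nat.le_div_iff_mul_le (by omega)]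
      have := Nat.div_mul_le_self (20 * k) (l ^ 2)
      nlinarith
    have e2 : (4 * l + 3) * a ≤ x + 5 * L := by
      calc (4 * l + 3) * a ≤ 5 * l * a := by gcongr; omega
        _ = 5 * l * (20 * k / l ^ 2) + 5 * l := by simp only [a]; ring
        _ ≤ _ := by omega
    have e3 : 9 * L * z ≤ 5 * L ^ 6 := by
      have h1 : 2 * z ≤ L * L ^ 4 := by
        have : L * l ^ 4 ≤ L * L ^ 4 := by gcongr
        omega
      have : 9 * L * (2 * z) ≤ 9 * L * (L * L ^ 4) := by gcongr
      have : 9 * L * (L * L ^ 4) = 9 * L ^ 6 := by ring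
      have : 9 * L * (2 * z) = 2 * (9 * L * z) := by ring
      omega
    have e4 : 1 + 5 * L + 5 * L ^ 6 ≤ x := by
      rw [hx, Nat.le_div_iff_mul_le (by omega)]
      calc (1 + 5 * L + 5 * L ^ 6) * l ≤ (1 + 5 * L + 5 * L ^ 6) * L := by gcongr
        _ ≤ 2 ^ (L - 1) := by rw [mul_comm]; exact pow_six_bound hL
        _ ≤ 100 * k := by omega
    omega

/-! ### The induction -/

/-- The exponent in the bound for a set `U` without rainbow `K_t` avoiding `D`: a fixed amount for each
colour still present in `U`, about `log k` more for each such colour in `D`, and a last term for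
the future passages to smaller `t`. The subtraction and division are in `ℕ`; the difference is
never truncated, and `L` is about `log k`. -/
def boundExponent (k L : ℕ) (c : Sym2 V → C) (U : Finset V) (D : Finset C) (t : ℕ) : ℕ :=
  1000 * (colorsOn c U).card + 9 * L * (colorsOn c U ∩ D).card +
    (300 * k - 100 * k / (Nat.log 2 t + 1))

/-- Induction on `t` and, for fixed `t`, on the number of colours present in `U`. -/
theorem card_le_of_avoidsRainbow [Fintype C] {c : Sym2 V → C} (hc : NoTwoColoredK4 c) {k L : ℕ}
    (hCk : Fintype.card C = k) (hL : 101 ≤ L) (hkL : 2 ^ (L - 1) ≤ k) (hkL' : k < 2 ^ L) :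
    ∀ t, t ≠ 0 → t ≤ k → ∀ m, ∀ (U : Finset V) (D : Finset C), (colorsOn c U).card = m →
      U.card ≤ 2 ^ (2000 * k) → AvoidsRainbow c D t U → U.card ≤ 2 ^ boundExponent k L c U D t := by
  classical
  intro t
  induction t using Nat.strong_induction_on with
  | _ t iht =>
  intro ht htk m
  induction m using Nat.strong_induction_on with
  | _ m ihm =>
  intro U D hm hUB hav
  by_contra! hbig
  set l := Nat.log 2 t + 1 with hl
  have htl : t < 2 ^ l := Nat.lt_pow_succ_log_self (by norm_num) t
  have htl' : 2 ^ (l - 1) ≤ t := Nat.pow_log_le_self 2 ht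
  have hlL : l ≤ L := by
    have : 2 ^ (l - 1) < 2 ^ L := by omega
    have := (Nat.pow_lt_pow_iff_right (by norm_num : 1 < 2)).1 this
    omega
  have hM : 8 * t ^ 4 ≤ 2 ^ (4 * l + 3) := by
    calc 8 * t ^ 4 ≤ 2 ^ 3 * (2 ^ l) ^ 4 := by gcongr; norm_num
      _ = 2 ^ (4 * l + 3) := by rw [← pow_mul, ← pow_add]; congr 1; ring
  have hLk : 10 * L ≤ k := by
    have h1 := pow_six_bound hL
    have h2 : 100 ^ 6 ≤ L ^ 6 := by gcongr; omega
    nlinarith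
  have hU8 : 8 * t ^ 4 ≤ U.card := by
    refine hM.trans (le_trans ?_ hbig.le)
    refine Nat.pow_le_pow_right (by norm_num) ?_
    have : 100 * k / (Nat.log 2 t + 1) ≤ 100 * k := Nat.div_le_self _ _
    unfold boundExponent
    omega
  have hUpos : 0 < U.card := lt_of_lt_of_le (by positivity) hU8
  rcases exists_large_degree c U D t ht hU8 hav with ⟨x, hx, i, hiD, hdeg⟩ | ⟨X, hXU, hX, hdeg⟩
  · -- a colour of `D` with large degree can be removed
    obtain ⟨W, hWU, hW, hiW⟩ := hc.exists_kill U i x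
    have hiU := mem_colorsOn_of_nb (c := c) hx (Nat.pos_of_ne_zero (right_ne_zero_of_mul (hUpos.trans_le hdeg).ne'))
    have hsub := colorsOn_mono c hWU
    have h1 : (colorsOn c W).card < (colorsOn c U).card :=
      card_lt_card ((ssubset_iff_of_subset hsub).2 ⟨i, hiU, hiW⟩)
    have h2 : (colorsOn c W ∩ D).card < (colorsOn c U ∩ D).card :=
      card_lt_card ((ssubset_iff_of_subset (inter_subset_inter_right hsub)).2
        ⟨i, mem_inter.2 ⟨hiU, hiD⟩, fun h => hiW (mem_inter.1 h).1⟩)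
    have h3 := ihm _ (hm ▸ h1) W D rfl ((card_le_card hWU).trans hUB)
      (fun R hR => hav R (hR.trans hWU))
    refine absurd hbig (not_lt.2 ?_)
    calc U.card ≤ 8 * t ^ 4 * k * (2 * W.card) := by
          rw [← hCk]; exact hdeg.trans (by gcongr)
      _ ≤ 2 ^ (4 * l + 3) * 2 ^ L * (2 ^ 1 * 2 ^ boundExponent k L c W D t) := by gcongr; norm_num
      _ = 2 ^ (4 * l + 3 + L + (1 + boundExponent k L c W D t)) := by simp only [pow_add]
      _ ≤ 2 ^ boundExponent k L c U D t := by
        refine Nat.pow_le_pow_right (by norm_num) ?_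
        unfold boundExponent
        have : 9 * L * ((colorsOn c W ∩ D).card + 1) ≤ 9 * L * (colorsOn c U ∩ D).card := by
          gcongr; omega
        rw [mul_add] at this
        omega
  have hXpos : 0 < X.card := by omega
  by_cases hl250 : l < 250
  · -- for bounded `t`, a single colour can be removed at bounded cost
    obtain ⟨x, hx⟩ := card_pos.1 hXpos
    obtain ⟨i, -, hdi⟩ := hdeg x hx
    obtain ⟨W, hWU, hW, hiW⟩ := hc.exists_kill U i x
    have hiU := mem_colorsOn_of_nb (c := c) (hXU hx) (Nat.pos_of_ne_zero (right_ne_zero_of_mul (hUpos.trans_le hdi).ne'))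
    have hsub := colorsOn_mono c hWU
    have h1 : (colorsOn c W).card < (colorsOn c U).card :=
      card_lt_card ((ssubset_iff_of_subset hsub).2 ⟨i, hiU, hiW⟩)
    have h2 : (colorsOn c W ∩ D).card ≤ (colorsOn c U ∩ D).card :=
      card_le_card (inter_subset_inter_right hsub)
    have h3 := ihm _ (hm ▸ h1) W D rfl ((card_le_card hWU).trans hUB)
      (fun R hR => hav R (hR.trans hWU))
    refine absurd hbig (not_lt.2 ?_)
    calc U.card ≤ 8 * t ^ 4 * (2 * W.card) := hdi.trans (by gcongr)
      _ ≤ 2 ^ (4 * l + 3) * (2 ^ 1 * 2 ^ boundExponent k L c W D t) := by gcongr; norm_num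
      _ = 2 ^ (4 * l + 3 + (1 + boundExponent k L c W D t)) := by simp only [pow_add]
      _ ≤ 2 ^ boundExponent k L c U D t := by
        refine Nat.pow_le_pow_right (by norm_num) ?_
        unfold boundExponent
        have : 9 * L * (colorsOn c W ∩ D).card ≤ 9 * L * (colorsOn c U ∩ D).card := by
          gcongr
        omega
  push Not at hl250
  obtain ⟨n1, n2, n3⟩ := numeric hL hkL hl250 hlL
  set a := 20 * k / l ^ 2 + 1 with ha
  set h := 200 * L * l ^ 4 with hh
  set z := L * (l ^ 2).choose 2 with hz
  -- a popular colour `i`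
  have : Nonempty C := Fintype.card_pos_iff.1 (by omega)
  choose! φ hφD hφ using hdeg
  obtain ⟨i, hi⟩ : ∃ i, X.card ≤ k * (X.filter fun x => φ x = i).card := by
    by_contra! hlt
    have : X.card = ∑ i : C, (X.filter fun x => φ x = i).card :=
      card_eq_sum_card_fiberwise (fun _ _ => mem_coe.2 (mem_univ _))
    have hne : (univ : Finset C).Nonempty := by
      rw [← card_pos, card_univ, hCk]; omega
    have h2 := sum_lt_sum_of_nonempty hne fun i _ => hlt i
    rw [← mul_sum, ← this, sum_const, card_univ, hCk, smul_eq_mul] at h2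
    exact lt_irrefl _ h2
  set X' := X.filter fun x => φ x = i with hX'
  have hX'pos : 0 < X'.card := by
    rcases Nat.eq_zero_or_pos X'.card with h0 | h0
    · rw [h0] at hi; omega
    · exact h0
  set μ := X'.card / 2 ^ h with hμ
  obtain ⟨Y, hYU, hY, hcod⟩ := exists_common_neighborhood X' U
    (fun x y => y ≠ x ∧ c s(x, y) = i) (card_pos.1 hX'pos) (card_pos.1 hUpos) a (L * l ^ 2)
    (8 * t ^ 4) μ (by simp [ha]) (by
      intro x hx
      obtain ⟨hx, hxi⟩ := mem_filter.1 hx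
      have hd := hφ x hx
      rwa [hxi] at hd) (by
      calc 2 * (8 * t ^ 4) ^ a * U.card ^ (L * l ^ 2) * μ ^ a
          ≤ 2 ^ 1 * (2 ^ (4 * l + 3)) ^ a * (2 ^ (2000 * k)) ^ (L * l ^ 2) * μ ^ a := by
            gcongr; norm_num
        _ = 2 ^ (1 + (4 * l + 3) * a + 2000 * k * (L * l ^ 2)) * μ ^ a := by
            simp only [pow_add, pow_mul]
        _ ≤ 2 ^ (h * a) * μ ^ a := by gcongr; norm_num
        _ = (μ * 2 ^ h) ^ a := by rw [mul_pow, pow_mul]; ring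
        _ ≤ X'.card ^ a := by gcongr; exact Nat.div_mul_le_self _ _)
  -- either pass from `t` to `l ^ 2` inside `Y`, or find `R` in `Y` killing `z` colours
  by_cases htrans : ∃ D', D ⊆ D' ∧ D'.card ≤ D.card + z ∧ AvoidsRainbow c D' (l ^ 2) Y
  · obtain ⟨D', hDD, hD'c, hav'⟩ := htrans
    have hlt := (log_sq_bound hl250).2
    have h3 := iht (l ^ 2) (by omega) (by positivity) (by omega) _ Y D' rfl
      ((card_le_card hYU).trans hUB) hav'
    have hsub := colorsOn_mono c hYU
    have h1 : (colorsOn c Y).card ≤ (colorsOn c U).card := card_le_card hsub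
    have h2 : (colorsOn c Y ∩ D').card ≤ (colorsOn c U ∩ D).card + z := by
      have e1 : colorsOn c Y ∩ D' ⊆ (colorsOn c U ∩ D) ∪ (D' \ D) := by
        intro j hj
        simp only [mem_inter, mem_union, mem_sdiff] at hj ⊢
        have := hsub hj.1
        tauto
      have e2 := (card_le_card e1).trans (card_union_le _ _)
      have e3 := card_sdiff_add_card_eq_card hDD
      omega
    refine absurd hbig (not_lt.2 ?_)
    calc U.card ≤ 2 * (8 * t ^ 4) ^ a * Y.card := hY
      _ ≤ 2 ^ 1 * (2 ^ (4 * l + 3)) ^ a * 2 ^ boundExponent k L c Y D' (l ^ 2) := by gcongr; norm_num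
      _ = 2 ^ (1 + (4 * l + 3) * a + boundExponent k L c Y D' (l ^ 2)) := by
        simp only [pow_add, pow_mul]
      _ ≤ 2 ^ boundExponent k L c U D t := by
        refine Nat.pow_le_pow_right (by norm_num) ?_
        unfold boundExponent
        rw [← hl]
        have : 9 * L * (colorsOn c Y ∩ D').card ≤ 9 * L * (colorsOn c U ∩ D).card + 9 * L * z := by
          rw [← mul_add]; gcongr
        omega
  · push Not at htrans
    obtain ⟨R, hRY, hRc, Z, hZR, hZD, hZc⟩ := exists_many_colors c Y D (l ^ 2) L htrans
    rw [← hz] at hZc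
    have hzpos : 0 < z := by omega
    have hRne : R.Nonempty := by
      obtain ⟨j, hj⟩ := card_pos.1 (hZc ▸ hzpos)
      obtain ⟨v, hv, -⟩ := mem_colorsOn.1 (hZR hj)
      exact ⟨v, hv⟩
    obtain ⟨g, hg⟩ : ∃ g : Fin (L * l ^ 2) → R, Function.Surjective g := by
      obtain ⟨e⟩ := Function.Embedding.nonempty_of_card_le (α := R) (β := Fin (L * l ^ 2))
        (by simpa using hRc)
      have : Nonempty R := hRne.to_subtype
      exact ⟨Function.invFun e, Function.invFun_surjective e.injective⟩
    have hW := hcod (fun j => g j) (fun j => hRY (g j).2)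
    set W := X'.filter fun x => ∀ j, (g j : V) ≠ x ∧ c s(x, (g j : V)) = i with hWdef
    have hWU : W ⊆ U := (filter_subset _ _).trans ((filter_subset _ _).trans hXU)
    have hdis : Disjoint (colorsOn c R) (colorsOn c W) := by
      refine hc.disjoint_colorsOn (i := i) fun x hx y hy => ?_
      obtain ⟨j, hj⟩ := hg ⟨y, hy⟩
      have := (mem_filter.1 hx).2 j
      rwa [hj] at this
    have hsub := colorsOn_mono c hWU
    have h1 : (colorsOn c W).card + z ≤ (colorsOn c U).card := by
      rw [← hZc, ← card_union_of_disjoint (disjoint_of_subset_left hZR hdis).symm]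
      exact card_le_card (union_subset hsub (hZR.trans (colorsOn_mono c (hRY.trans hYU))))
    have h2 : (colorsOn c W ∩ D).card ≤ (colorsOn c U ∩ D).card :=
      card_le_card (inter_subset_inter_right hsub)
    have h3 := ihm (colorsOn c W).card (by omega) W D rfl ((card_le_card hWU).trans hUB)
      (fun R hR => hav R (hR.trans hWU))
    have hX'W : X'.card ≤ 2 ^ h * (2 ^ 1 * 2 ^ boundExponent k L c W D t) := by
      have e1 : X'.card < 2 ^ h * (μ + 1) := by
        rw [hμ]; exact Nat.lt_mul_div_succ _ (by positivity)
      have e2 : 1 ≤ 2 ^ boundExponent k L c W D t := Nat.one_le_two_pow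
      refine e1.le.trans ?_
      gcongr
      omega
    refine absurd hbig (not_lt.2 ?_)
    calc U.card ≤ 2 * X.card := hX
      _ ≤ 2 ^ 1 * (2 ^ L * (2 ^ h * (2 ^ 1 * 2 ^ boundExponent k L c W D t))) := by
        rw [pow_one]
        gcongr
        exact hi.trans (by rw [pow_one] at hX'W; gcongr)
      _ = 2 ^ (1 + (L + (h + (1 + boundExponent k L c W D t)))) := by simp only [pow_add]
      _ ≤ 2 ^ boundExponent k L c U D t := by
        refine Nat.pow_le_pow_right (by norm_num) ?_
        unfold boundExponent
        have : 9 * L * (colorsOn c W ∩ D).card ≤ 9 * L * (colorsOn c U ∩ D).card := by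
          gcongr
        omega

/-- **Theorem 1.** For every `k > 2^100` and every `n ≥ 2^(2000 k)`, every
`k`-edge-coloring of `K_n` contains a `K_4` whose edges receive at most two colors;
equivalently `g(k) < 2^(2000 k)`. -/
theorem exponential_upper_bound_for_g
    (k n : ℕ) (hk : 2 ^ 100 < k) (hn : 2 ^ (2000 * k) ≤ n)
    (c : Sym2 (Fin n) → Fin k) :
    ∃ S : Finset (Fin n), S.card = 4 ∧ (colorsOn c S).card ≤ 2 := by
  by_contra! hno
  have hc : NoTwoColoredK4 c := fun S hS => hno S hS
  have hk0 : k ≠ 0 := by omega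
  have hlog : 2 ^ Nat.log 2 k ≤ k := Nat.pow_log_le_self 2 hk0
  have hlog' : k < 2 ^ (Nat.log 2 k + 1) := Nat.lt_pow_succ_log_self (by norm_num) k
  have hL : 100 ≤ Nat.log 2 k := Nat.le_log_of_pow_le (by norm_num) hk.le
  obtain ⟨U, -, hU⟩ := exists_subset_card_eq (s := (univ : Finset (Fin n)))
    (n := 2 ^ (2000 * k)) (by simpa using hn)
  -- a rainbow `K_k` would need more than `k` colours
  have hav : AvoidsRainbow c ∅ k U := by
    intro R hR hRc hrb
    exfalso
    have h1 := card_colorsOn_of_isRainbow hrb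
    have h2 : (colorsOn c R).card ≤ k := (card_le_univ _).trans (by simp)
    rw [h1, hRc, Nat.choose_two_right] at h2
    have h3 : k * 4 / 2 ≤ k * (k - 1) / 2 := by gcongr; omega
    omega
  have h := card_le_of_avoidsRainbow hc (k := k) (L := Nat.log 2 k + 1) (by simp) (by omega)
    (by simpa using hlog) hlog' k hk0 le_rfl _ U ∅ rfl hU.le hav
  rw [hU] at h
  have h1 := (Nat.pow_le_pow_iff_right (by norm_num : 1 < 2)).1 h
  have h2 : (colorsOn c U).card ≤ k := (card_le_univ _).trans (by simp)
  unfold boundExponent at h1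
  simp only [inter_empty, card_empty, mul_zero] at h1
  generalize 100 * k / _ = j at h1
  omega
end

section
/- Let d, k, t be positive integers with 3 ≤ d ≤ t, d ≥ 40·log₂ t, and k ≥ C(d,2). Then g(k,t) ≤ max( 4k · g(k,t)^((20 log₂ t)/d) · g(k,d), 2^C(d,2) · g(k − C(d,2), t) ). -/
/-! Let `c` be an extremal coloring on `n = g(k,t)` vertices, with `n > 2 ^ C(d,2) * g(k - C(d,2), t)`.

* If every color degree inside a large vertex set is below about `n / t ^ 5`, that set contains a
  rainbow `K_t`, found greedily (`exists_rainbow`). So more than half of the vertices have a large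
  degree in some color, and one color `i` works for at least `n / (2 k)` of them
  (`exists_popular_color`).
* If `R` is a rainbow `K_d` and `W` its common neighborhood in color `i`, no color of `R` occurs in
  `W` (`color_ne`), as otherwise some `K_4` would receive only two colors. Hence
  `#W ≤ g(k - C(d,2), t) < n / 2 ^ C(d,2)`.
* Dependent random choice in color `i` (`dependent_choice`): let `T` be a random `s`-tuple of
  vertices, with `s` about `2 log₂ n / (d - 1)`, and `U` its common `i`-neighborhood. The expected
  size of `U` is at least `(n / (2 k)) * t ^ (-5 s)`. Every rainbow `K_d` has a small common
  neighborhood, so the expected number of them inside `U` is at most one. A set of `g(k,d) + r`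
  vertices contains at least `r` rainbow copies of `K_d`, so the expected size of `U` is also at
  most `g(k,d) + 1 ≤ 2 g(k,d)`. Comparing the two bounds gives the first term of the maximum,
  since `t ^ (5 s) ≤ n ^ (20 log₂ t / d)`.
-/

open Finset

/-! ### Rainbow cliques under small color degrees -/

lemma rainbow_insert {V C : Type*} [DecidableEq V] [DecidableEq C] {c : Sym2 V → C}
    {R : Finset V} {v : V} (hR : IsRainbow c R)
    (h1 : ∀ a ∈ R, c s(v, a) ∉ colorsOn c R)
    (h2 : ∀ a ∈ R, ∀ b ∈ R, a ≠ b → c s(v, a) ≠ c s(v, b)) :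
    IsRainbow c (insert v R) := by
  have h3 : ∀ a ∈ R, ∀ x ∈ R, ∀ y ∈ R, x ≠ y → c s(v, a) ≠ c s(x, y) := by
    intro a ha x hx y hy hxy h
    exact h1 a ha (mem_image.2 ⟨(x, y), by simp [hx, hy, hxy], h.symm⟩)
  intro a ha b hb x hx y hy hab hxy hne
  rcases mem_insert.1 ha with rfl | ha' <;> rcases mem_insert.1 hb with rfl | hb' <;>
    rcases mem_insert.1 hx with rfl | hx' <;> rcases mem_insert.1 hy with rfl | hy'
  all_goals first
    | exact absurd rfl hab
    | exact absurd rfl hxy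
    | exact absurd rfl hne
    | exact absurd Sym2.eq_swap hne
    | exact hR _ ‹_› _ ‹_› _ ‹_› _ ‹_› hab hxy hne
    | exact h3 _ ‹_› _ ‹_› _ ‹_› hxy
    | exact (h3 _ ‹_› _ ‹_› _ ‹_› hab).symm
    | (rw [Sym2.eq_swap]; exact h3 _ ‹_› _ ‹_› _ ‹_› hxy)
    | (rw [Sym2.eq_swap (a := x)]; exact (h3 _ ‹_› _ ‹_› _ ‹_› hab).symm)
    | exact h2 _ ‹_› _ ‹_› (fun h => hne (by rw [h]))
    | (rw [Sym2.eq_swap]; exact h2 _ ‹_› _ ‹_› (fun h => hne (by rw [h, Sym2.eq_swap])))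
    | (rw [Sym2.eq_swap (a := x)]; exact h2 _ ‹_› _ ‹_› (fun h => hne (by rw [h, Sym2.eq_swap])))
    | (rw [Sym2.eq_swap, Sym2.eq_swap (a := x)]
       exact h2 _ ‹_› _ ‹_› (fun h => hne (by rw [h])))

lemma card_colorsOn_rainbow {V C : Type*} [DecidableEq V] [DecidableEq C] {c : Sym2 V → C}
    {R : Finset V} (hR : IsRainbow c R) : (colorsOn c R).card = R.card.choose 2 := by
  have h : colorsOn c R = (R.offDiag.image Sym2.mk.uncurry).image c := by
    rw [image_image]; rfl
  rw [h, card_image_of_injOn, Sym2.card_image_offDiag]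
  intro e he f hf hef
  simp only [coe_image, Set.mem_image, mem_coe, mem_offDiag, Prod.exists] at he hf
  obtain ⟨a, b, ⟨ha, hb, hab⟩, rfl⟩ := he
  obtain ⟨x, y, ⟨hx, hy, hxy⟩, rfl⟩ := hf
  by_contra hne
  exact hR a ha b hb x hx y hy hab hxy hne hef

/-- Vertices of `S` joined to `x` in color `i`; `x` itself is excluded whatever the color of
the diagonal element `s(x, x)`. -/
def nbr {V C : Type*} [DecidableEq V] [DecidableEq C] (c : Sym2 V → C) (S : Finset V)
    (i : C) (x : V) : Finset V :=
  S.filter fun y => y ≠ x ∧ c s(x, y) = i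

/-- Vertices of `S` which see `a` and `b` in the same color. -/
def same {V C : Type*} [DecidableEq V] [DecidableEq C] (c : Sym2 V → C) (S : Finset V)
    (a b : V) : Finset V :=
  S.filter fun v => v ≠ a ∧ v ≠ b ∧ c s(v, a) = c s(v, b)

/-- Double counting of the triples `(w, v, a)` with `c(w,v) = c(w,a)`: for a fixed `a`, only
few `v` can have many such `w`. -/
lemma card_bad {V C : Type*} [DecidableEq V] [DecidableEq C] (c : Sym2 V → C) (S : Finset V)
    (D M : ℕ) (hS : 0 < S.card) (hdeg : ∀ x ∈ S, ∀ i, (nbr c S i x).card ≤ D) (a : V) :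
    (S.filter fun v => S.card < M * (same c S a v).card).card ≤ M * D := by
  have e : ∑ v ∈ S, (same c S a v).card ≤ S.card * D := by
    have : ∀ v ∈ S, (same c S a v).card
        ≤ (S.filter fun w => v ∈ nbr c S (c s(w, a)) w).card := by
      intro v hv
      apply card_le_card
      intro w hw
      simp only [same, nbr, mem_filter] at hw ⊢
      exact ⟨hw.1, hv, hw.2.2.1.symm, hw.2.2.2.symm⟩
    refine (sum_le_sum this).trans ?_
    have hdc := sum_card_bipartiteAbove_eq_sum_card_bipartiteBelow (s := S) (t := S)
      (r := fun w v => v ∈ nbr c S (c s(w, a)) w)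
    simp only [bipartiteAbove, bipartiteBelow] at hdc
    rw [← hdc, ← smul_eq_mul]
    apply sum_le_card_nsmul
    intro w hw
    refine (card_le_card ?_).trans (hdeg w hw (c s(w, a)))
    intro v hv
    exact (mem_filter.1 hv).2
  have h : (S.filter fun v => S.card < M * (same c S a v).card).card * S.card
      ≤ M * (S.card * D) := by
    calc _ ≤ ∑ v ∈ S.filter (fun v => S.card < M * (same c S a v).card),
              M * (same c S a v).card := by
            rw [← smul_eq_mul]
            apply card_nsmul_le_sum
            intro v hv
            exact (mem_filter.1 hv).2.le
      _ ≤ ∑ v ∈ S, M * (same c S a v).card :=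
            sum_le_sum_of_subset (filter_subset _ _)
      _ ≤ _ := by rw [← mul_sum]; exact Nat.mul_le_mul_left _ e
  exact Nat.le_of_mul_le_mul_right (by linarith [mul_right_comm M D S.card]) hS

/-- If all color degrees inside `S` are small, a rainbow `K_t` can be chosen greedily: besides
staying rainbow, the chosen vertices are kept pairwise such that few vertices see them in the
same color. -/
lemma exists_rainbow_s5 {V C : Type*} [DecidableEq V] [DecidableEq C] (c : Sym2 V → C)
    (S : Finset V) (t D : ℕ) (hD : 1 ≤ D) (hN : 8 * t ^ 3 * D < S.card)
    (hdeg : ∀ x ∈ S, ∀ i, (nbr c S i x).card ≤ D) :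
    ∃ R ⊆ S, R.card = t ∧ IsRainbow c R := by
  have key : ∀ m ≤ t, ∃ R ⊆ S, R.card = m ∧ IsRainbow c R ∧
      ∀ a ∈ R, ∀ b ∈ R, a ≠ b → 2 * t ^ 2 * (same c S a b).card ≤ S.card := by
    intro m
    induction m with
    | zero => exact fun _ => ⟨∅, by simp, by simp, by simp [IsRainbow], by simp⟩
    | succ m ih =>
      intro hm
      obtain ⟨R, hRS, hRc, hR, hpair⟩ := ih (by omega)
      set bad : V → Finset V := fun a =>
        S.filter fun v => S.card < 2 * t ^ 2 * (same c S a v).card with hbad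
      set F : Finset V := ((R ∪ R.biUnion fun a => (colorsOn c R).biUnion fun i => nbr c S i a) ∪
        R.offDiag.biUnion fun p => same c S p.1 p.2) ∪ R.biUnion bad with hF
      have hcol : (colorsOn c R).card ≤ m * m := by
        refine card_image_le.trans ?_
        rw [offDiag_card, hRc]; omega
      have f1 : (R.biUnion fun a => (colorsOn c R).biUnion fun i => nbr c S i a).card
          ≤ m * (m * m * D) := by
        rw [← hRc]
        refine card_biUnion_le_card_mul _ _ _ fun a ha => ?_
        refine (card_biUnion_le_card_mul _ _ D fun i _ => hdeg a (hRS ha) i).trans ?_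
        rw [hRc]
        exact Nat.mul_le_mul_right _ hcol
      have ht : 0 < 2 * t ^ 2 := by
        have : 0 < t := by omega
        positivity
      have f2 : (R.offDiag.biUnion fun p => same c S p.1 p.2).card
          ≤ m * m * (S.card / (2 * t ^ 2)) := by
        refine (card_biUnion_le_card_mul _ _ (S.card / (2 * t ^ 2)) fun p hp => ?_).trans ?_
        · rw [mem_offDiag] at hp
          rw [Nat.le_div_iff_mul_le ht, mul_comm]
          exact hpair _ hp.1 _ hp.2.1 hp.2.2
        · apply Nat.mul_le_mul_right
          rw [offDiag_card, hRc]; omega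
      have f3 : (R.biUnion bad).card ≤ m * (2 * t ^ 2 * D) := by
        rw [← hRc]
        exact card_biUnion_le_card_mul _ _ _ fun a _ =>
          card_bad c S D _ (by omega) hdeg a
      have hFc : F.card < S.card := by
        have g1 : F.card ≤ _ := card_union_le ((R ∪ R.biUnion fun a =>
          (colorsOn c R).biUnion fun i => nbr c S i a) ∪
            R.offDiag.biUnion fun p => same c S p.1 p.2) (R.biUnion bad)
        have g2 := card_union_le (R ∪ R.biUnion fun a => (colorsOn c R).biUnion fun i =>
          nbr c S i a) (R.offDiag.biUnion fun p => same c S p.1 p.2)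
        have g3 := card_union_le R (R.biUnion fun a => (colorsOn c R).biUnion fun i =>
          nbr c S i a)
        have g4 : 2 * t ^ 2 * (S.card / (2 * t ^ 2)) ≤ S.card := Nat.mul_div_le _ _
        have hmt : m ≤ t := by omega
        have g5 : m * m * (S.card / (2 * t ^ 2)) ≤ t ^ 2 * (S.card / (2 * t ^ 2)) := by
          rw [pow_two]; gcongr
        have g6 : m * (m * m * D) ≤ t ^ 3 * D := by
          calc _ ≤ t * (t * t * D) := by gcongr
            _ = _ := by ring
        have g7 : m * (2 * t ^ 2 * D) ≤ 2 * (t ^ 3 * D) := by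
          calc _ ≤ t * (2 * t ^ 2 * D) := by gcongr
            _ = _ := by ring
        have g8 : t ≤ t ^ 3 * D := by
          calc t ≤ t ^ 3 := Nat.le_self_pow (by norm_num) t
            _ ≤ _ := Nat.le_mul_of_pos_right _ hD
        rw [mul_assoc] at g4 hN
        omega
      obtain ⟨v, hvS, hvF⟩ := exists_mem_notMem_of_card_lt_card hFc
      simp only [hF, mem_union, not_or, mem_biUnion, not_exists, not_and] at hvF
      obtain ⟨⟨⟨n1, n2⟩, n3⟩, n4⟩ := hvF
      have hva : ∀ a ∈ R, v ≠ a := fun a ha h => n1 (h ▸ ha)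
      have hgood : ∀ a ∈ R, 2 * t ^ 2 * (same c S a v).card ≤ S.card := by
        intro a ha
        have := n4 a ha
        simp only [hbad, mem_filter, not_and, not_lt] at this
        exact this hvS
      have hsymm : ∀ a b, same c S a b = same c S b a := by
        intro a b
        ext w
        simp only [same, mem_filter]
        grind
      refine ⟨insert v R, insert_subset hvS hRS, by rw [card_insert_of_notMem n1, hRc],
        rainbow_insert hR ?_ ?_, ?_⟩
      · intro a ha hc
        apply n2 a ha _ hc
        simp only [nbr, mem_filter]
        exact ⟨hvS, hva a ha, by rw [Sym2.eq_swap]⟩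
      · intro a ha b hb hab hc
        apply n3 (a, b) (by simp [ha, hb, hab])
        simp only [same, mem_filter]
        exact ⟨hvS, hva a ha, hva b hb, hc⟩
      · intro a ha b hb hab
        rcases mem_insert.1 ha with rfl | ha' <;> rcases mem_insert.1 hb with rfl | hb'
        · exact absurd rfl hab
        · rw [hsymm]; exact hgood b hb'
        · exact hgood a ha'
        · exact hpair a ha' b hb' hab
  obtain ⟨R, h1, h2, h3, -⟩ := key t le_rfl
  exact ⟨R, h1, h2, h3⟩

/-! ### Restricting colorings and excluding colors -/

/-- Restriction of a coloring to a vertex set `W` on which only colors from `P` occur, followed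
by a relabelling `f` of the colors in `P`. -/
lemma goodColoring_restrict {V : Type*} [DecidableEq V] {k k' t : ℕ}
    (c : Sym2 V → Fin k) (h4 : ∀ S : Finset V, S.card = 4 → 3 ≤ (colorsOn c S).card)
    (W : Finset V) (hW : ∀ S ⊆ W, S.card = t → ¬ IsRainbow c S)
    (P : Finset (Fin k)) (hP : ∀ x ∈ W, ∀ y ∈ W, x ≠ y → c s(x, y) ∈ P)
    (f : Fin k → Fin k') (hf : Set.InjOn f P) : GoodColoring k' t W.card := by
  let e : Fin W.card ↪ V := W.equivFin.symm.toEmbedding.trans (Function.Embedding.subtype _)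
  have he : ∀ a, e a ∈ W := fun a => (W.equivFin.symm a).2
  have hmap : ∀ S : Finset (Fin W.card), S.map e ⊆ W := by
    intro S x hx
    obtain ⟨a, -, rfl⟩ := mem_map.1 hx
    exact he a
  refine ⟨fun z => f (c (z.map e)), ?_, ?_⟩
  · intro S hS hr
    apply hW (S.map e) (hmap S) (by rw [card_map, hS])
    intro a ha b hb x hx y hy hab hxy hne heq
    obtain ⟨a, haS, rfl⟩ := mem_map.1 ha
    obtain ⟨b, hbS, rfl⟩ := mem_map.1 hb
    obtain ⟨x, hxS, rfl⟩ := mem_map.1 hx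
    obtain ⟨y, hyS, rfl⟩ := mem_map.1 hy
    refine hr a haS b hbS x hxS y hyS (fun h => hab (by rw [h])) (fun h => hxy (by rw [h])) ?_ ?_
    · intro h
      apply hne
      have := congrArg (Sym2.map e) h
      simpa using this
    · simp [heq]
  · intro S hS
    have h := h4 (S.map e) (by rw [card_map, hS])
    have hsub : (colorsOn c (S.map e)).image f ⊆ colorsOn (fun z => f (c (z.map e))) S := by
      intro z hz
      simp only [colorsOn, mem_image, mem_offDiag, Prod.exists] at hz ⊢
      obtain ⟨_, ⟨x, y, ⟨hx, hy, hxy⟩, rfl⟩, rfl⟩ := hz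
      obtain ⟨x, hxS, rfl⟩ := mem_map.1 hx
      obtain ⟨y, hyS, rfl⟩ := mem_map.1 hy
      exact ⟨x, y, ⟨hxS, hyS, fun h => hxy (by rw [h])⟩, by simp⟩
    refine h.trans (le_trans (le_of_eq ?_) (card_le_card hsub))
    rw [card_image_of_injOn]
    apply hf.mono
    intro z hz
    simp only [colorsOn, coe_image, Set.mem_image, mem_coe, mem_offDiag, Prod.exists] at hz
    obtain ⟨x, y, ⟨hx, hy, hxy⟩, rfl⟩ := hz
    exact hP x (hmap S hx) y (hmap S hy) hxy

/-- An edge `xy` in the common `i`-neighborhood of a pair `ab` cannot have the color of `ab`: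
otherwise `{x, y, a, b}` would span at most two colors. -/
lemma color_ne {V C : Type*} [DecidableEq V] [DecidableEq C] {c : Sym2 V → C}
    (h4 : ∀ S : Finset V, S.card = 4 → 3 ≤ (colorsOn c S).card) {i : C} {x y a b : V}
    (hxy : x ≠ y) (hab : a ≠ b) (hxa : x ≠ a ∧ c s(x, a) = i) (hxb : x ≠ b ∧ c s(x, b) = i)
    (hya : y ≠ a ∧ c s(y, a) = i) (hyb : y ≠ b ∧ c s(y, b) = i) : c s(x, y) ≠ c s(a, b) := by
  intro h
  have hc : ({x, y, a, b} : Finset V).card = 4 := by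
    rw [card_insert_of_notMem, card_insert_of_notMem, card_insert_of_notMem, card_singleton]
    all_goals simp [*]
  have h3 := h4 _ hc
  have hsub : colorsOn c {x, y, a, b} ⊆ {i, c s(a, b)} := by
    intro z hz
    simp only [colorsOn, mem_image, mem_offDiag, Prod.exists] at hz
    obtain ⟨p, q, ⟨hp, hq, hpq⟩, rfl⟩ := hz
    have := @Sym2.eq_swap V
    simp only [mem_insert, mem_singleton] at hp hq ⊢
    rcases hp with rfl | rfl | rfl | rfl <;> rcases hq with rfl | rfl | rfl | rfl <;> grind
  have := (card_le_card hsub).trans card_le_two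
  omega

/-- A relabelling as required by `goodColoring_restrict`; positivity of `k'` provides a value for
the colors outside `P`. -/
lemma exists_relabel {k k' : ℕ} (hk' : 0 < k') (P : Finset (Fin k)) (hP : P.card ≤ k') :
    ∃ f : Fin k → Fin k', Set.InjOn f P := by
  have : Nonempty (Fin k') := ⟨⟨0, hk'⟩⟩
  obtain ⟨g⟩ := Function.Embedding.nonempty_of_card_le (α := P) (β := Fin k') (by simpa using hP)
  refine ⟨fun x => if h : x ∈ P then g ⟨x, h⟩ else Classical.arbitrary _, ?_⟩
  intro x hx y hy hxy
  have hx' : x ∈ P := hx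
  have hy' : y ∈ P := hy
  simp only [hx', hy', dif_pos] at hxy
  simpa using g.injective hxy

/-! ### Dependent random choice -/

/-- If every set of more than `g` vertices contains a set satisfying `p` (of positive size), then
deleting a vertex from each such set shows that `U` contains at least `#U - g` of them. -/
lemma card_le_add_count {V : Type*} [DecidableEq V] (p : Finset V → Prop) [DecidablePred p]
    (g : ℕ) (hp : ¬ p ∅) (h : ∀ U : Finset V, g < U.card → ∃ R ⊆ U, p R) (U : Finset V) :
    U.card ≤ g + (U.powerset.filter p).card := by
  induction U using Finset.strongInduction with
  | H U ih =>
    by_cases hU : g < U.card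
    · obtain ⟨R, hRU, hR⟩ := h U hU
      have hne : R.Nonempty := nonempty_iff_ne_empty.2 fun h0 => hp (h0 ▸ hR)
      obtain ⟨x, hx⟩ := hne
      have h1 := ih (U.erase x) (erase_ssubset (hRU hx))
      have h2 : ((U.erase x).powerset.filter p).card < (U.powerset.filter p).card := by
        apply card_lt_card
        rw [ssubset_iff_of_subset (filter_subset_filter _ (powerset_mono.2 (erase_subset _ _)))]
        refine ⟨R, by simp [hRU, hR], ?_⟩
        intro hc
        have := mem_powerset.1 (mem_filter.1 hc).1 hx
        simp at this
      have h3 := card_erase_add_one (hRU hx)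
      omega
    · omega

/-- Dependent random choice in color `i`, in counting form: `s`-tuples `T` are counted together
with the vertices, respectively the `d`-sets satisfying `p`, in their common neighborhood. -/
lemma dependent_choice {V C : Type*} [Fintype V] [DecidableEq V] [DecidableEq C]
    (c : Sym2 V → C) (i : C) (p : Finset V → Prop) [DecidablePred p] (d g m s D : ℕ)
    (hd : 0 < d) (hcard : ∀ R, p R → R.card = d)
    (hp : ∀ U : Finset V, g < U.card → ∃ R ⊆ U, p R)
    (hm : ∀ R, p R → (univ.filter fun y => ∀ a ∈ R, y ≠ a ∧ c s(y, a) = i).card ≤ m)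
    (H : Finset V) (hH : ∀ x ∈ H, D ≤ (nbr c univ i x).card) :
    H.card * D ^ s ≤ Fintype.card V ^ s * g + Fintype.card V ^ d * m ^ s := by
  set U : (Fin s → V) → Finset V := fun T =>
    univ.filter fun x => ∀ j, T j ≠ x ∧ c s(x, T j) = i with hU
  have h0 : ¬ p ∅ := fun h => by have := hcard _ h; simp at this; omega
  have e1 : H.card * D ^ s ≤ ∑ T, (U T).card := by
    have hcount : ∑ T, (U T).card = ∑ x : V, (nbr c univ i x).card ^ s := by
      have hdc := sum_card_bipartiteAbove_eq_sum_card_bipartiteBelow (s := (univ : Finset V))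
        (t := univ) (r := fun x (T : Fin s → V) => ∀ j, T j ≠ x ∧ c s(x, T j) = i)
      refine Eq.trans ?_ (hdc.symm.trans ?_)
      · rfl
      apply sum_congr rfl
      intro x _
      have : (bipartiteAbove (fun x (T : Fin s → V) => ∀ j, T j ≠ x ∧ c s(x, T j) = i) univ x)
          = Fintype.piFinset fun _ : Fin s => nbr c univ i x := by
        ext T
        simp [bipartiteAbove, nbr]
      rw [this, Fintype.card_piFinset]
      simp
    rw [hcount]
    calc H.card * D ^ s ≤ ∑ x ∈ H, (nbr c univ i x).card ^ s := by
          rw [← smul_eq_mul]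
          exact card_nsmul_le_sum _ _ _ fun x hx => Nat.pow_le_pow_left (hH x hx) s
      _ ≤ _ := sum_le_sum_of_subset (subset_univ _)
  have e2 : ∑ T, ((U T).powerset.filter p).card ≤ Fintype.card V ^ d * m ^ s := by
    have hcount : ∑ T, ((U T).powerset.filter p).card =
        ∑ R ∈ univ.filter p, (univ.filter fun T : Fin s → V => R ⊆ U T).card := by
      have := sum_card_bipartiteAbove_eq_sum_card_bipartiteBelow
        (s := univ.filter p) (t := (univ : Finset (Fin s → V))) (r := fun R T => R ⊆ U T)
      simp only [bipartiteAbove] at this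
      refine Eq.trans ?_ this.symm
      apply sum_congr rfl
      intro T _
      congr 1
      ext R
      simp [bipartiteBelow, and_comm]
    rw [hcount]
    have hR : ∀ R ∈ univ.filter p, (univ.filter fun T : Fin s → V => R ⊆ U T).card ≤ m ^ s := by
      intro R hR
      have hpR := (mem_filter.1 hR).2
      have : (univ.filter fun T : Fin s → V => R ⊆ U T) = Fintype.piFinset fun _ : Fin s =>
          univ.filter fun y => ∀ a ∈ R, y ≠ a ∧ c s(y, a) = i := by
        ext T
        simp only [mem_filter, mem_univ, true_and, Fintype.mem_piFinset, hU, subset_iff]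
        constructor
        · intro h j a ha
          exact ⟨(h ha j).1, by rw [Sym2.eq_swap]; exact (h ha j).2⟩
        · intro h a ha j
          exact ⟨(h j a ha).1, by rw [Sym2.eq_swap]; exact (h j a ha).2⟩
      rw [this, Fintype.card_piFinset]
      simpa using Nat.pow_le_pow_left (hm R hpR) s
    refine (sum_le_card_nsmul _ _ _ hR).trans ?_
    rw [smul_eq_mul]
    apply Nat.mul_le_mul_right
    calc (univ.filter p).card ≤ (powersetCard d (univ : Finset V)).card := by
          apply card_le_card
          intro R hR
          exact mem_powersetCard.2 ⟨subset_univ _, hcard R (mem_filter.1 hR).2⟩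
      _ ≤ _ := by
          rw [card_powersetCard, card_univ]
          exact Nat.choose_le_pow _ _
  calc _ ≤ ∑ T, (U T).card := e1
    _ ≤ ∑ T : Fin s → V, (g + ((U T).powerset.filter p).card) :=
        sum_le_sum fun T _ => card_le_add_count p g h0 hp (U T)
    _ ≤ _ := by
        rw [sum_add_distrib, sum_const, card_univ, Fintype.card_fun, Fintype.card_fin, smul_eq_mul]
        exact Nat.add_le_add_left e2 _

/-! ### A popular color, and the recursion -/

/-- More than half of the vertices have a color degree above `n / t ^ 5` when there is no rainbow
`K_t`; by pigeonhole a fixed color serves for a `1 / (2 k)` proportion of the vertices. -/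
lemma exists_popular_color {n k t : ℕ} (ht : 6 ≤ t) (hn : t ^ 5 ≤ n) (c : Sym2 (Fin n) → Fin k)
    (hr : ∀ S : Finset (Fin n), S.card = t → ¬ IsRainbow c S) :
    ∃ (i : Fin k) (H : Finset (Fin n)), n ≤ 2 * (k * H.card) ∧
      ∀ x ∈ H, n / t ^ 5 + 1 ≤ (nbr c univ i x).card := by
  set D := n / t ^ 5 with hD
  have ht5 : 0 < t ^ 5 := by positivity
  have hD1 : 1 ≤ D := (Nat.one_le_div_iff ht5).2 hn
  have hDn : t ^ 5 * D ≤ n := Nat.mul_div_le _ _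
  set Hs : Fin k → Finset (Fin n) := fun i => univ.filter fun x => D + 1 ≤ (nbr c univ i x).card
    with hHs
  set S : Finset (Fin n) := (univ.biUnion Hs)ᶜ with hS
  have hScard : 2 * S.card < n := by
    by_contra! hcon
    have hbig : 8 * t ^ 3 * D < S.card := by
      have h1 : 36 * (t ^ 3 * D) ≤ t ^ 5 * D := by
        calc 36 * (t ^ 3 * D) ≤ t ^ 2 * (t ^ 3 * D) := by
              apply Nat.mul_le_mul_right; nlinarith
          _ = _ := by ring
      have h2 : 0 < t ^ 3 * D := by positivity
      rw [mul_assoc]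
      omega
    obtain ⟨R, -, hRt, hR⟩ := exists_rainbow_s5 c S t D hD1 hbig (by
      intro x hx i
      have hx' : x ∉ Hs i := fun h => (mem_compl.1 hx) (mem_biUnion.2 ⟨i, mem_univ _, h⟩)
      simp only [hHs, mem_filter, mem_univ, true_and, not_le] at hx'
      have : (nbr c S i x).card ≤ (nbr c univ i x).card :=
        card_le_card (filter_subset_filter _ (subset_univ _))
      omega)
    exact hr R hRt hR
  have hcompl : S.card + (univ.biUnion Hs).card = n := by
    have := card_compl_add_card (univ.biUnion Hs)
    rwa [Fintype.card_fin] at this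
  have hn0 : 0 < n := lt_of_lt_of_le ht5 hn
  have _hk : Nonempty (Fin k) := ⟨c s(⟨0, hn0⟩, ⟨0, hn0⟩)⟩
  obtain ⟨i, -, hi⟩ := exists_max_image univ (fun i => (Hs i).card) univ_nonempty
  refine ⟨i, Hs i, ?_, fun x hx => (mem_filter.1 hx).2⟩
  have : (univ.biUnion Hs).card ≤ k * (Hs i).card := by
    have := card_biUnion_le_card_mul univ Hs (Hs i).card (fun j _ => hi j (mem_univ _))
    simpa using this
  omega

/-- **Lemma 6 (main recursion).** For positive integers `d, k, t` with `3 ≤ d ≤ t`,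
`d ≥ 40 log₂ t` and `k ≥ C(d,2)`, the quantity `g(k,t)` (formalized as the greatest `n`
admitting a good coloring) satisfies
`g(k,t) ≤ max( 4k g(k,t)^{(20 log₂ t)/d} g(k,d), 2^{C(d,2)} g(k - C(d,2), t) )`. -/
theorem g_recursive_bound
    (d k t : ℕ) (gkt gkd gk't : ℕ)
    (hd : 3 ≤ d) (hdt : d ≤ t) (hlog : 40 * Real.logb 2 t ≤ (d : ℝ))
    (hk : d.choose 2 ≤ k)
    (h1 : IsGreatest {n : ℕ | 0 < n ∧ GoodColoring k t n} gkt)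
    (h2 : IsGreatest {n : ℕ | 0 < n ∧ GoodColoring k d n} gkd)
    (h3 : IsGreatest {n : ℕ | 0 < n ∧ GoodColoring (k - d.choose 2) t n} gk't) :
    (gkt : ℝ) ≤
      max (4 * k * (gkt : ℝ) ^ ((20 * Real.logb 2 t) / d) * gkd)
        ((2 : ℝ) ^ d.choose 2 * gk't) := by
  rename' gkt => n, gk't => m
  rw [le_max_iff]
  by_contra! hcon
  obtain ⟨hcon1, hcon2⟩ := hcon
  apply absurd hcon1
  rw [not_lt]
  obtain ⟨⟨hn0, c, hr, h4⟩, -⟩ := h1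
  have hm1 : 1 ≤ m := h3.1.1
  have hg1 : 1 ≤ gkd := h2.1.1
  have hlt : 2 ^ d.choose 2 * m < n := by exact_mod_cast hcon2
  have hk' : 0 < k - d.choose 2 := by
    obtain ⟨hpos, c', -, -⟩ := h3.1
    exact lt_of_le_of_lt (Nat.zero_le _) (c' s(⟨0, hpos⟩, ⟨0, hpos⟩)).2
  -- The real quantities: `L = log₂ t` and `N = log₂ n`.
  have ht3 : 3 ≤ t := hd.trans hdt
  have htR : (3 : ℝ) ≤ t := by exact_mod_cast ht3
  set L := Real.logb 2 t with hL
  have htL : (t : ℝ) = 2 ^ L := by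
    rw [hL, Real.rpow_logb (by norm_num) (by norm_num) (by linarith)]
  have hL1 : 1 ≤ L := by
    rw [hL, Real.le_logb_iff_rpow_le (by norm_num) (by linarith)]
    norm_num; linarith
  have hd40 : (40 : ℝ) ≤ d := by linarith
  have hd40' : 40 ≤ d := by exact_mod_cast hd40
  have hnR : (0 : ℝ) < n := by exact_mod_cast hn0
  set N := Real.logb 2 n with hN
  have hnN : (n : ℝ) = 2 ^ N := by
    rw [hN, Real.rpow_logb (by norm_num) (by norm_num) hnR]
  have hchoose : ((d.choose 2 : ℕ) : ℝ) = d * (d - 1) / 2 := Nat.cast_choose_two ℝ d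
  have hNd : (d : ℝ) * (d - 1) / 2 ≤ N := by
    rw [← hchoose, hN, Real.le_logb_iff_rpow_le (by norm_num) hnR, Real.rpow_natCast]
    have : 2 ^ d.choose 2 ≤ n := by nlinarith [Nat.two_pow_pos (d.choose 2)]
    exact_mod_cast this
  have hnt : t ^ 5 ≤ n := by
    have : ((t : ℝ)) ^ 5 ≤ n := by
      rw [htL, hnN, ← Real.rpow_natCast, ← Real.rpow_mul (by norm_num)]
      apply Real.rpow_le_rpow_of_exponent_le (by norm_num)
      push_cast
      nlinarith
    exact_mod_cast this
  -- Tuples of length `s` make the `d`-sets with a small common neighborhood negligible.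
  set s := ⌈2 * N / (d - 1)⌉₊ with hs
  have hs1 : 2 * N ≤ s * (d - 1) := by
    have := Nat.le_ceil (2 * N / ((d : ℝ) - 1))
    rwa [div_le_iff₀ (by linarith)] at this
  have hs2 : (s : ℝ) * d ≤ 4 * N := by
    have hpos : 0 ≤ 2 * N / ((d : ℝ) - 1) := by
      apply div_nonneg <;> nlinarith
    have h := (Nat.ceil_lt_add_one hpos).le
    have h' : 2 * N / ((d : ℝ) - 1) * d ≤ 3 * N := by
      rw [div_mul_eq_mul_div, div_le_iff₀ (by linarith)]
      nlinarith
    have h'' : (d : ℝ) ≤ N := by nlinarith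
    calc (s : ℝ) * d ≤ (2 * N / ((d : ℝ) - 1) + 1) * d := by
          apply mul_le_mul_of_nonneg_right h; linarith
      _ ≤ _ := by linarith
  have hpow : n ^ d ≤ (2 ^ d.choose 2) ^ s := by
    have : (n : ℝ) ^ d ≤ (2 ^ d.choose 2) ^ s := by
      rw [hnN, ← Real.rpow_natCast, ← Real.rpow_mul (by norm_num), ← pow_mul,
        ← Real.rpow_natCast]
      apply Real.rpow_le_rpow_of_exponent_le (by norm_num)
      push_cast
      rw [hchoose]
      nlinarith
    exact_mod_cast this
  have hts : (t : ℝ) ^ (5 * s) ≤ (n : ℝ) ^ (20 * L / d) := by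
    rw [htL, hnN, ← Real.rpow_natCast, ← Real.rpow_mul (by norm_num),
      ← Real.rpow_mul (by norm_num)]
    apply Real.rpow_le_rpow_of_exponent_le (by norm_num)
    rw [← mul_div_assoc, le_div_iff₀ (by linarith)]
    push_cast
    nlinarith
  obtain ⟨i, H, hH, hdeg⟩ := exists_popular_color (by omega) hnt c hr
  have hdrc := dependent_choice c i (fun R => R.card = d ∧ IsRainbow c R) d gkd m s
    (n / t ^ 5 + 1) (by omega) (fun R h => h.1) (by
      intro U hU
      by_contra! hno
      have hgood : GoodColoring k d U.card :=
        goodColoring_restrict c h4 U (fun S hS hSd hSr => hno S hS hSd hSr) univ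
          (fun _ _ _ _ _ => mem_univ _) id (Set.injOn_id _)
      have := h2.2 (show U.card ∈ _ from ⟨by omega, hgood⟩)
      omega) (by
      rintro R ⟨hRd, hR⟩
      set W := univ.filter fun y => ∀ a ∈ R, y ≠ a ∧ c s(y, a) = i with hW
      have hPc : ((colorsOn c R)ᶜ).card ≤ k - d.choose 2 := by
        rw [card_compl, card_colorsOn_rainbow hR, hRd, Fintype.card_fin]
      obtain ⟨f, hf⟩ := exists_relabel hk' _ hPc
      have hgood : GoodColoring (k - d.choose 2) t W.card := by
        refine goodColoring_restrict c h4 W (fun S _ hS => hr S hS) (colorsOn c R)ᶜ ?_ f hf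
        intro x hx y hy hxy
        rw [mem_compl]
        intro hc
        simp only [colorsOn, mem_image, mem_offDiag, Prod.exists] at hc
        obtain ⟨a, b, ⟨ha, hb, hab⟩, heq⟩ := hc
        have hx' := (mem_filter.1 hx).2
        have hy' := (mem_filter.1 hy).2
        exact color_ne h4 hxy hab (hx' a ha) (hx' b hb) (hy' a ha) (hy' b hb) heq.symm
      have hWm : W.card ≤ m := by
        rcases Nat.eq_zero_or_pos W.card with h0 | hpos
        · omega
        · exact h3.2 ⟨hpos, hgood⟩
      convert hWm) H hdeg
  rw [Fintype.card_fin] at hdrc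
  have hsmall : n ^ d * m ^ s ≤ n ^ s := by
    calc n ^ d * m ^ s ≤ (2 ^ d.choose 2) ^ s * m ^ s := Nat.mul_le_mul_right _ hpow
      _ = (2 ^ d.choose 2 * m) ^ s := (mul_pow _ _ _).symm
      _ ≤ n ^ s := Nat.pow_le_pow_left hlt.le s
  have hfin : n * n ^ s ≤ 4 * k * t ^ (5 * s) * gkd * n ^ s := by
    have hq : n ≤ t ^ 5 * (n / t ^ 5 + 1) :=
      (Nat.lt_mul_div_succ n (by positivity)).le
    calc n * n ^ s ≤ (2 * (k * H.card)) * (t ^ 5 * (n / t ^ 5 + 1)) ^ s := by gcongr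
      _ = 2 * k * t ^ (5 * s) * (H.card * (n / t ^ 5 + 1) ^ s) := by
          rw [mul_pow, pow_mul]; ring
      _ ≤ 2 * k * t ^ (5 * s) * (n ^ s * gkd + n ^ s * gkd) := by
          gcongr
          exact hdrc.trans (Nat.add_le_add_left (hsmall.trans (Nat.le_mul_of_pos_right _ hg1)) _)
      _ = _ := by ring
  have hfin' : n ≤ 4 * k * t ^ (5 * s) * gkd :=
    Nat.le_of_mul_le_mul_right hfin (by positivity)
  calc (n : ℝ) ≤ 4 * k * (t : ℝ) ^ (5 * s) * gkd := by exact_mod_cast hfin'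
    _ ≤ _ := by gcongr
end
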